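/- Let n ∈ ℕ and let f : ℂ× → M_n(ℂ) be holomorphic with f(z) invertible for every z ∈ ℂ× (where ℂ× = ℂ \ {0}). Then there exist integers κ₁ ≥ κ₂ ≥ ⋯ ≥ κ_n, an entire map F₊ : ℂ → M_n(ℂ) with invertible values, and a holomorphic map F₋ : ℂ× → M_n(ℂ) with invertible values possessing an invertible limit F₋(∞) as |z| → ∞, such that f(z) = F₊(z)·diag(z^{κ₁},…,z^{κ_n})·F₋(z) for all z ∈ ℂ×. Moreover, the n-tuple (κ₁,…,κ_n) is uniquely determined by f. -/

import Mathlib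

open Filter

/-- A Birkhoff decomposition `f = F₊ · diag(z^κ) · F₋` on `ℂ× = ℂ \ {0}`, where `F₊` is
entire and `GL_n`-valued on all of `ℂ`, and `F₋` is holomorphic and `GL_n`-valued on `ℂ×`
with an invertible limit at `∞`. -/
def EntireBirkhoffFactorization (n : ℕ) (f : ℂ → Matrix (Fin n) (Fin n) ℂ)
    (κ : Fin n → ℤ) : Prop :=
  ∃ Fp Fm : ℂ → Matrix (Fin n) (Fin n) ℂ, ∃ L : Matrix (Fin n) (Fin n) ℂ,
    (∀ i j, Differentiable ℂ fun z => Fp z i j) ∧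
    (∀ z : ℂ, IsUnit (Fp z)) ∧
    (∀ i j, DifferentiableOn ℂ (fun z => Fm z i j) {z : ℂ | z ≠ 0}) ∧
    (∀ z : ℂ, z ≠ 0 → IsUnit (Fm z)) ∧
    IsUnit L ∧
    (∀ i j, Tendsto (fun z => Fm z i j)
      (comap (fun z : ℂ => ‖z‖) atTop) (nhds (L i j))) ∧
    (∀ z : ℂ, z ≠ 0 → f z = Fp z * Matrix.diagonal (fun i => z ^ κ i) * Fm z)



namespace Birk

/-- Laurent coefficient computed on the circle of radius `r`. -/
noncomputable def lc (F : ℂ → ℂ) (r : ℝ) (k : ℤ) : ℂ :=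
  (2 * Real.pi * Complex.I : ℂ)⁻¹ • ∮ z in C(0, r), (z - 0)⁻¹ • (z ^ (-k) * F z)

lemma lc_indep_le (F : ℂ → ℂ) (hF : DifferentiableOn ℂ F {z : ℂ | z ≠ 0}) {r R : ℝ}
    (hr : 0 < r) (hrR : r ≤ R) (k : ℤ) : lc F R k = lc F r k := by
  unfold lc
  congr 1
  have hd : DifferentiableOn ℂ (fun z : ℂ => z ^ (-k) * F z) {z : ℂ | z ≠ 0} := by
    intro z hz
    exact ((differentiableAt_zpow.2 (Or.inl hz)).differentiableWithinAt).mul (hF z hz)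
  have hopen : IsOpen {z : ℂ | z ≠ 0} := isOpen_ne
  apply Complex.circleIntegral_sub_center_inv_smul_eq_of_differentiable_on_annulus_off_countable
    hr hrR Set.countable_empty
  · apply hd.continuousOn.mono
    intro z hz
    rintro rfl
    exact hz.2 (Metric.mem_ball_self hr)
  · intro z hz
    refine (hd z ?_).differentiableAt (hopen.mem_nhds ?_) <;>
    · rintro rfl
      exact hz.1.2 (Metric.mem_closedBall_self hr.le)

lemma lc_indep (F : ℂ → ℂ) (hF : DifferentiableOn ℂ F {z : ℂ | z ≠ 0}) {r R : ℝ}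
    (hr : 0 < r) (hR : 0 < R) (k : ℤ) : lc F R k = lc F r k := by
  rcases le_total r R with h | h
  · exact lc_indep_le F hF hr h k
  · exact (lc_indep_le F hF hR h k).symm

lemma lc_bound (F : ℂ → ℂ) {r M : ℝ} (hr : 0 < r) (hM : ∀ z : ℂ, ‖z‖ = r → ‖F z‖ ≤ M) (k : ℤ) :
    ‖lc F r k‖ ≤ M * r ^ (-k) := by
  have := circleIntegral.norm_two_pi_i_inv_smul_integral_le_of_norm_le_const (c := 0)
    (f := fun z : ℂ => (z - 0)⁻¹ • (z ^ (-k) * F z)) (C := r⁻¹ * (r ^ (-k) * M)) hr.le ?_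
  · refine this.trans (le_of_eq ?_)
    field_simp
  · intro z hz
    have hz : ‖z‖ = r := by simpa using hz
    rw [norm_smul, norm_mul, norm_zpow, norm_inv, sub_zero, hz]
    gcongr
    exact hM z hz

lemma bdd_circle (F : ℂ → ℂ) (hF : DifferentiableOn ℂ F {z : ℂ | z ≠ 0}) {r : ℝ} (hr : 0 < r) :
    ∃ M, ∀ z : ℂ, ‖z‖ = r → ‖F z‖ ≤ M := by
  have hc : ContinuousOn F (Metric.sphere 0 r) := by
    apply hF.continuousOn.mono
    intro z hz
    rintro rfl
    simp at hz
    exact hr.ne hz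
  obtain ⟨M, hM⟩ := (isCompact_sphere (0 : ℂ) r).exists_bound_of_continuousOn hc
  exact ⟨M, fun z hz => hM z (by simpa using hz)⟩

lemma summable_two_sided (q : ℝ) (hq0 : 0 ≤ q) (hq : q < 1) :
    Summable (fun k : ℤ => q ^ k.natAbs) := by
  apply Summable.of_nat_of_neg
  · simpa using summable_geometric_of_lt_one hq0 hq
  · simpa using summable_geometric_of_lt_one hq0 hq

/-- two-circle bound gives two-sided geometric decay -/
lemma two_sided_bound {a r M1 M2 : ℝ} (hr : 0 < r) (k : ℤ)
    (h1 : a ≤ M1 * (2 * r) ^ (-k)) (h2 : a ≤ M2 * (r / 2) ^ (-k)) (hM1 : 0 ≤ M1) (hM2 : 0 ≤ M2) :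
    a * r ^ k ≤ (M1 + M2) * (1 / 2 : ℝ) ^ k.natAbs := by
  have hrk : 0 < r ^ k := zpow_pos hr k
  rcases le_total 0 k with hk | hk
  · obtain ⟨m, rfl⟩ := Int.eq_ofNat_of_zero_le hk
    have : a * r ^ (m : ℤ) ≤ M1 * (1 / 2 : ℝ) ^ m := by
      calc a * r ^ (m : ℤ) ≤ M1 * (2 * r) ^ (-(m : ℤ)) * r ^ (m : ℤ) := by gcongr
        _ = M1 * (1 / 2 : ℝ) ^ m := by
          rw [zpow_neg, mul_zpow]; field_simp; simp
    refine this.trans ?_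
    simp only [Int.natAbs_natCast]
    gcongr
    linarith
  · obtain ⟨m, hm⟩ := Int.eq_ofNat_of_zero_le (neg_nonneg.2 hk)
    obtain rfl : k = -(m : ℤ) := by omega
    have : a * r ^ (-(m : ℤ)) ≤ M2 * (1 / 2 : ℝ) ^ m := by
      calc a * r ^ (-(m : ℤ)) ≤ M2 * (r / 2) ^ (- -(m : ℤ)) * r ^ (-(m : ℤ)) := by gcongr
        _ = M2 * (1 / 2 : ℝ) ^ m := by
          rw [neg_neg, zpow_neg, div_zpow]; field_simp; simp
    refine this.trans ?_
    simp only [Int.natAbs_neg, Int.natAbs_natCast]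
    gcongr
    linarith

lemma laurent_scalar (F : ℂ → ℂ) (hF : DifferentiableOn ℂ F {z : ℂ | z ≠ 0}) :
    ∃ c : ℤ → ℂ, (∀ z : ℂ, z ≠ 0 → HasSum (fun k => c k * z ^ k) (F z)) ∧
      (∀ r M : ℝ, 0 < r → (∀ z : ℂ, ‖z‖ = r → ‖F z‖ ≤ M) → ∀ k, ‖c k‖ ≤ M * r ^ (-k)) := by
  have hb : ∀ r M : ℝ, 0 < r → (∀ z : ℂ, ‖z‖ = r → ‖F z‖ ≤ M) → ∀ k,
      ‖lc F 1 k‖ ≤ M * r ^ (-k) := by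
    intro r M hr hM k
    rw [← lc_indep F hF one_pos hr k]
    exact lc_bound F hr hM k
  refine ⟨lc F 1, ?_, hb⟩
  intro z hz
  set r := ‖z‖ with hrdef
  have hr : 0 < r := norm_pos_iff.2 hz
  have : Fact (0 < 2 * Real.pi) := ⟨Real.two_pi_pos⟩
  let G : C(AddCircle (2 * Real.pi), ℂ) :=
    ⟨fun x => F (r * (AddCircle.toCircle x : ℂ)), by
      have h1 : Continuous fun x : AddCircle (2 * Real.pi) => (r * (AddCircle.toCircle x : ℂ) : ℂ) :=
        continuous_const.mul (continuous_subtype_val.comp AddCircle.continuous_toCircle)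
      refine hF.continuousOn.comp_continuous h1 ?_
      intro x
      have : (r : ℂ) ≠ 0 := by exact_mod_cast hr.ne'
      simp [this]⟩
  have hcoef : ∀ k, fourierCoeff G k = lc F 1 k * r ^ k := by
    intro k
    rw [← lc_indep F hF one_pos hr k, fourierCoeff_eq_intervalIntegral _ _ 0, lc, circleIntegral]
    have hrc : (r : ℂ) ≠ 0 := by exact_mod_cast hr.ne'
    rw [smul_eq_mul, mul_assoc, mul_comm _ ((r : ℂ) ^ k), ← intervalIntegral.integral_const_mul,
      ← intervalIntegral.integral_const_mul, zero_add, ← intervalIntegral.integral_smul]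
    apply intervalIntegral.integral_congr
    intro x _
    simp only [deriv_circleMap, smul_eq_mul, sub_zero, G, ContinuousMap.coe_mk, fourier_apply,
      AddCircle.toCircle_zsmul, AddCircle.toCircle_apply_mk]
    have hx : circleMap 0 r x = r * Complex.exp (x * Complex.I) := by simp [circleMap]
    have hx0 : Complex.exp (x * Complex.I) ≠ 0 := Complex.exp_ne_zero _
    have hpi : (Real.pi : ℂ) ≠ 0 := by exact_mod_cast Real.pi_ne_zero
    have h2 : 2 * Real.pi / (2 * Real.pi) * x = x := by
      have := Real.pi_ne_zero
      field_simp
    rw [hx, h2, Circle.coe_zpow, Circle.coe_exp, mul_zpow, zpow_neg (r : ℂ)]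
    simp only [Complex.real_smul]
    push_cast
    field_simp [Complex.I_ne_zero]
  have hsum : Summable (fourierCoeff G) := by
    obtain ⟨M1, hM1⟩ := bdd_circle F hF (r := 2 * r) (by positivity)
    obtain ⟨M2, hM2⟩ := bdd_circle F hF (r := r / 2) (by positivity)
    refine Summable.of_norm_bounded (g := fun k : ℤ => (|M1| + |M2|) * (1 / 2 : ℝ) ^ k.natAbs)
      ((summable_two_sided _ (by norm_num) (by norm_num)).mul_left _) ?_
    intro k
    rw [hcoef, norm_mul, norm_zpow, Complex.norm_real, Real.norm_of_nonneg hr.le]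
    refine two_sided_bound hr k ?_ ?_ (abs_nonneg _) (abs_nonneg _)
    · exact hb _ _ (by positivity) (fun z hz => (hM1 z hz).trans (le_abs_self _)) k
    · exact hb _ _ (by positivity) (fun z hz => (hM2 z hz).trans (le_abs_self _)) k
  have hfin := has_pointwise_sum_fourier_series_of_summable hsum
    ((Complex.arg z : ℝ) : AddCircle (2 * Real.pi))
  have hza : (r : ℂ) * Complex.exp (Complex.arg z * Complex.I) = z := Complex.norm_mul_exp_arg_mul_I z
  have h2 : 2 * Real.pi / (2 * Real.pi) * Complex.arg z = Complex.arg z := by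
    have := Real.pi_ne_zero
    field_simp
  convert hfin using 1
  · ext k
    rw [hcoef, fourier_apply, AddCircle.toCircle_zsmul, AddCircle.toCircle_apply_mk, h2,
      Circle.coe_zpow, Circle.coe_exp, smul_eq_mul, mul_assoc, ← mul_zpow, hza]
  · simp only [G, ContinuousMap.coe_mk, AddCircle.toCircle_apply_mk, h2, Circle.coe_exp, hza]

end Birk


namespace Birk

section toeplitz
set_option linter.unusedSectionVars false
variable {A : Type*} [NormedRing A] [NormedAlgebra ℂ A] [CompleteSpace A]

lemma conv_summable (e : ℤ → A) (he : Summable fun m => ‖e m‖) (x : ℕ → A) {B : ℝ}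
    (hx : ∀ j, ‖x j‖ ≤ B) (k : ℤ) : Summable fun j : ℕ => ‖e (k - j) * x j‖ := by
  have hinj : Function.Injective (fun j : ℕ => k - (j : ℤ)) := by
    intro a b h
    simpa using h
  refine Summable.of_nonneg_of_le (fun _ => norm_nonneg _) (fun j => ?_)
    ((he.comp_injective hinj).mul_right B)
  exact (norm_mul_le _ _).trans (mul_le_mul_of_nonneg_left (hx j) (norm_nonneg _))

lemma conv_bound (e : ℤ → A) (he : Summable fun m => ‖e m‖) (hs : ∑' m, ‖e m‖ ≤ 1 / 8)
    (x : ℕ → A) {B : ℝ}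
    (hx : ∀ j, ‖x j‖ ≤ B) (k : ℤ) : ‖∑' j : ℕ, e (k - j) * x j‖ ≤ 1 / 8 * B := by
  have hinj : Function.Injective (fun j : ℕ => k - (j : ℤ)) := by
    intro a b h
    simpa using h
  have hB : 0 ≤ B := (norm_nonneg _).trans (hx 0)
  have h1 := conv_summable e he x hx k
  calc ‖∑' j : ℕ, e (k - j) * x j‖ ≤ ∑' j : ℕ, ‖e (k - j) * x j‖ := norm_tsum_le_tsum_norm h1
    _ ≤ ∑' j : ℕ, ‖e (k - j)‖ * B := by
        refine h1.tsum_le_tsum (fun j => ?_) ((he.comp_injective hinj).mul_right B)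
        exact (norm_mul_le _ _).trans (mul_le_mul_of_nonneg_left (hx j) (norm_nonneg _))
    _ = (∑' j : ℕ, ‖e (k - j)‖) * B := tsum_mul_right
    _ ≤ (∑' m, ‖e m‖) * B := by
        gcongr
        exact tsum_comp_le_tsum_of_inj he (fun _ => norm_nonneg _) hinj
    _ ≤ 1 / 8 * B := by gcongr

/-- the sequence `1, 0, 0, …` -/
def dlt (A : Type*) [Ring A] (k : ℕ) : A := if k = 0 then 1 else 0

lemma dlt_norm (h1 : ‖(1 : A)‖ ≤ 1) (k : ℕ) : ‖dlt A k‖ ≤ 1 := by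
  unfold dlt
  split_ifs
  · exact h1
  · simp

lemma toeplitz_solve (h1 : ‖(1 : A)‖ ≤ 1) (e : ℤ → A) (he : Summable fun m => ‖e m‖)
    (hs : ∑' m, ‖e m‖ ≤ 1 / 8) :
    ∃ x : ℕ → A, (∀ k, ‖x k‖ ≤ 2) ∧ (∀ k, ‖x k - dlt A k‖ ≤ 1 / 4) ∧
      ∀ k : ℕ, x k + ∑' j : ℕ, e (k - j) * x j = dlt A k := by
  classical
  let Φ : BoundedContinuousFunction ℕ A → BoundedContinuousFunction ℕ A := fun x =>
    BoundedContinuousFunction.ofNormedAddCommGroupDiscrete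
      (fun k : ℕ => dlt A k - ∑' j : ℕ, e (k - j) * x j) (1 + 1 / 8 * ‖x‖) (fun k =>
        (norm_sub_le _ _).trans
          (add_le_add (dlt_norm h1 k) (conv_bound e he hs _ (fun j => x.norm_coe_le_norm j) _)))
  have hΦ : ContractingWith (1 / 8 : NNReal) Φ := by
    refine ⟨?_, LipschitzWith.of_dist_le_mul fun x y => ?_⟩
    · rw [← NNReal.coe_lt_coe]; norm_num
    · rw [BoundedContinuousFunction.dist_le (by positivity)]
      intro k
      have hxy : ∀ j, ‖(x - y) j‖ ≤ dist x y := fun j => by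
        rw [dist_eq_norm]; exact (x - y).norm_coe_le_norm j
      have hb := conv_bound e he hs _ hxy k
      have hsx := (conv_summable e he x (fun j => x.norm_coe_le_norm j) k).of_norm
      have hsy := (conv_summable e he y (fun j => y.norm_coe_le_norm j) k).of_norm
      have : Φ x k - Φ y k = -∑' j : ℕ, e (k - j) * (x - y) j := by
        simp only [BoundedContinuousFunction.coe_sub, Pi.sub_apply, mul_sub]
        rw [hsx.tsum_sub hsy]
        simp [Φ]
      rw [dist_eq_norm, this, norm_neg]
      simpa using hb
  let x := ContractingWith.fixedPoint Φ hΦ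
  have hx : Φ x = x := hΦ.fixedPoint_isFixedPt
  have hxk : ∀ k : ℕ, x k = dlt A k - ∑' j : ℕ, e (k - j) * x j := fun k => by
    conv_lhs => rw [← hx]
    simp [Φ]
  have hbd : ‖x‖ ≤ 1 + 1 / 8 * ‖x‖ := by
    rw [BoundedContinuousFunction.norm_le (by positivity)]
    intro k
    rw [hxk]
    exact (norm_sub_le _ _).trans
          (add_le_add (dlt_norm h1 k) (conv_bound e he hs _ (fun j => x.norm_coe_le_norm j) _))
  have hx2 : ‖x‖ ≤ 2 := by linarith
  have hx2' : ∀ k, ‖x k‖ ≤ 2 := fun k => (x.norm_coe_le_norm k).trans hx2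
  refine ⟨x, hx2', fun k => ?_, fun k => ?_⟩
  · have := conv_bound e he hs _ hx2' k
    rw [hxk, sub_sub_cancel_left, norm_neg]
    linarith
  · conv_lhs => rw [hxk]
    abel

lemma powser_diff (y : ℕ → A) {R C : ℝ} (hR : 0 < R) (hy : ∀ l, ‖y l‖ * R ^ l ≤ C) :
    DifferentiableOn ℂ (fun z : ℂ => ∑' l, z ^ l • y l) (Metric.ball 0 R) := by
  intro z hz
  have hz : ‖z‖ < R := by simpa using hz
  obtain ⟨s, hs1, hs2⟩ := exists_between hz
  have hs0 : 0 ≤ s := (norm_nonneg z).trans hs1.le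
  have hC : 0 ≤ C := le_trans (by positivity) (hy 0)
  have key : DifferentiableOn ℂ (fun z : ℂ => ∑' l, z ^ l • y l) (Metric.ball 0 s) := by
    refine Complex.differentiableOn_tsum_of_summable_norm (u := fun l : ℕ => C * (s / R) ^ l)
      ((summable_geometric_of_lt_one (by positivity) ((div_lt_one hR).2 hs2)).mul_left C)
      (fun l => ?_) Metric.isOpen_ball (fun l w hw => ?_)
    · fun_prop
    · have hw : ‖w‖ < s := by simpa using hw
      rw [norm_smul, norm_pow, div_pow, mul_div_assoc', le_div_iff₀ (by positivity)]
      calc ‖w‖ ^ l * ‖y l‖ * R ^ l = (‖y l‖ * R ^ l) * ‖w‖ ^ l := by ring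
        _ ≤ C * s ^ l := by gcongr; exact hy l
  exact ((key z (by simpa using hs1)).differentiableAt
    (Metric.isOpen_ball.mem_nhds (by simpa using hs1))).differentiableWithinAt

lemma splitting (h1 : ‖(1 : A)‖ ≤ 1) (e : ℤ → A) (he : Summable fun m => ‖e m‖)
    (hs : ∑' m, ‖e m‖ ≤ 1 / 8) (hdec : ∀ s : ℝ, 0 < s → ∃ M, ∀ m, ‖e m‖ ≤ M * s ^ (-m))
    (E : ℂ → A) (hE : ∀ z : ℂ, z ≠ 0 → HasSum (fun k : ℤ => z ^ k • e k) (E z)) :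
    ∃ Np Q : ℂ → A, DifferentiableOn ℂ Np (Metric.ball 0 1) ∧ Differentiable ℂ Q ∧
      ‖Np (1 / 2) - 1‖ < 1 ∧ ∀ z : ℂ, z ≠ 0 → ‖z‖ < 1 → (1 + E z) * Np z = Q z⁻¹ := by
  obtain ⟨x, hx2, hxd, hxe⟩ := toeplitz_solve h1 e he hs
  let t : ℤ → A := fun k => ∑' j : ℕ, e (k - j) * x j
  let y : ℕ → A := fun l => if l = 0 then 1 else t (-(l : ℤ))
  have hxsum : ∀ z : ℂ, ‖z‖ < 1 → Summable fun j : ℕ => ‖z ^ j • x j‖ := by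
    intro z hz
    refine Summable.of_nonneg_of_le (fun _ => norm_nonneg _) (fun j => ?_)
      ((summable_geometric_of_lt_one (norm_nonneg z) hz).mul_right 2)
    rw [norm_smul, norm_pow]
    gcongr
    exact hx2 j
  have hesum : ∀ z : ℂ, z ≠ 0 → Summable fun k : ℤ => ‖z ^ k • e k‖ := by
    intro z hz
    have hr : 0 < ‖z‖ := norm_pos_iff.2 hz
    obtain ⟨M1, hM1⟩ := hdec (2 * ‖z‖) (by positivity)
    obtain ⟨M2, hM2⟩ := hdec (‖z‖ / 2) (by positivity)
    refine Summable.of_nonneg_of_le (fun _ => norm_nonneg _) (fun k => ?_)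
      ((summable_two_sided (1 / 2) (by norm_num) (by norm_num)).mul_left (|M1| + |M2|))
    rw [norm_smul, norm_zpow, mul_comm]
    refine two_sided_bound hr k ?_ ?_ (abs_nonneg _) (abs_nonneg _)
    · exact (hM1 k).trans (by gcongr; exact le_abs_self _)
    · exact (hM2 k).trans (by gcongr; exact le_abs_self _)
  refine ⟨fun z => ∑' j, z ^ j • x j, fun z => ∑' l, z ^ l • y l, ?_, ?_, ?_, ?_⟩
  · exact powser_diff x one_pos (C := 2) (by simpa using hx2)
  · intro z
    set R := ‖z‖ + 1 with hRdef
    have hR : 0 < R := by positivity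
    set s := min (1 / 2) (1 / R) with hsdef
    have hs0 : 0 < s := by positivity
    have hsh : s ≤ 1 / 2 := min_le_left _ _
    have hsR : s * R ≤ 1 := by
      rw [← le_div_iff₀ hR]; exact min_le_right _ _
    obtain ⟨M, hM⟩ := hdec s hs0
    have hM0 : 0 ≤ M := by simpa using (norm_nonneg _).trans (hM 0)
    have hty : ∀ l : ℕ, ‖t (-(l : ℤ))‖ ≤ (M * 2 * 2) * s ^ l := by
      intro l
      have hterm : ∀ j : ℕ, ‖e (-(l : ℤ) - j) * x j‖ ≤ (M * 2 * s ^ l) * (1 / 2) ^ j := by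
        intro j
        calc ‖e (-(l : ℤ) - j) * x j‖ ≤ ‖e (-(l : ℤ) - j)‖ * ‖x j‖ := norm_mul_le _ _
          _ ≤ (M * s ^ (-(-(l : ℤ) - j))) * 2 := by
              gcongr
              · exact hM _
              · exact hx2 j
          _ = (M * 2 * s ^ l) * s ^ j := by
              rw [show (-(-(l : ℤ) - j)) = ((l + j : ℕ) : ℤ) by push_cast; ring, zpow_natCast,
                pow_add]
              ring
          _ ≤ (M * 2 * s ^ l) * (1 / 2) ^ j := by gcongr
      have hg : HasSum (fun j : ℕ => (M * 2 * s ^ l) * (1 / 2 : ℝ) ^ j) ((M * 2 * s ^ l) * 2) :=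
        hasSum_geometric_two.mul_left _
      have := tsum_of_norm_bounded hg hterm
      refine this.trans (le_of_eq (by ring))
    have hd := powser_diff y hR (C := max ‖(1 : A)‖ (M * 2 * 2)) (fun l => by
      by_cases hl : l = 0
      · simp [y, hl]
      · simp only [y, hl, if_false]
        refine le_trans ?_ (le_max_right _ _)
        calc ‖t (-(l : ℤ))‖ * R ^ l ≤ (M * 2 * 2) * s ^ l * R ^ l := by gcongr; exact hty l
          _ = (M * 2 * 2) * (s * R) ^ l := by rw [mul_pow]; ring
          _ ≤ (M * 2 * 2) * 1 := by
              gcongr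
              exact pow_le_one₀ (by positivity) hsR
          _ = _ := mul_one _)
    have hzb : z ∈ Metric.ball (0 : ℂ) R := by simp [hRdef]
    exact (hd z hzb).differentiableAt (Metric.isOpen_ball.mem_nhds hzb)
  · have hh : ‖(1 / 2 : ℂ)‖ < 1 := by norm_num
    have hs1 := (hxsum _ hh).of_norm
    have hd1 : HasSum (fun j : ℕ => (1 / 2 : ℂ) ^ j • dlt A j) 1 := by
      convert hasSum_ite_eq 0 (1 : A) using 2 with j
      by_cases hj : j = 0 <;> simp [dlt, hj]
    have hsub := hs1.hasSum.sub hd1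
    have hb := hsub.norm_le_of_bounded (hasSum_geometric_two.mul_left (1 / 4)) (fun j => by
      rw [← smul_sub, norm_smul, norm_pow, mul_comm]
      have : ‖(1 / 2 : ℂ)‖ = 1 / 2 := by norm_num
      rw [this]
      gcongr
      exact hxd j)
    refine lt_of_le_of_lt hb (by norm_num)
  · intro z hz hz1
    have hEs := hesum z hz
    have hXs := hxsum z hz1
    have hprod : HasSum (fun p : ℤ × ℕ => (z ^ p.1 • e p.1) * (z ^ p.2 • x p.2))
        (E z * ∑' j, z ^ j • x j) := by
      have h := (summable_mul_of_summable_norm hEs hXs).hasSum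
      rwa [← tsum_mul_tsum_of_summable_norm hEs hXs, (hE z hz).tsum_eq] at h
    let σ : ℤ × ℕ ≃ ℤ × ℕ :=
      { toFun := fun p => (p.1 - p.2, p.2)
        invFun := fun p => (p.1 + p.2, p.2)
        left_inv := fun p => by simp
        right_inv := fun p => by simp }
    have hprod2 : HasSum (fun p : ℤ × ℕ => z ^ p.1 • (e (p.1 - p.2) * x p.2))
        (E z * ∑' j, z ^ j • x j) := by
      convert (σ.hasSum_iff).2 hprod using 1
      ext p
      simp only [σ, Function.comp, Equiv.coe_fn_mk, smul_mul_smul_comm]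
      congr 1
      rw [← zpow_natCast, ← zpow_add₀ hz]
      simp
    have hT : HasSum (fun k : ℤ => z ^ k • t k) (E z * ∑' j, z ^ j • x j) := by
      refine hprod2.prod_fiberwise (fun k => ?_)
      exact (((conv_summable e he x hx2 k).of_norm).hasSum).const_smul _
    let xh : ℤ → A := fun k => if 0 ≤ k then x k.toNat else 0
    have hX : HasSum (fun k : ℤ => z ^ k • xh k) (∑' j, z ^ j • x j) := by
      rw [← (Nat.cast_injective (R := ℤ)).hasSum_iff]
      · have h0 : ((fun k : ℤ => z ^ k • xh k) ∘ Nat.cast) = fun j : ℕ => z ^ j • x j := by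
          funext j
          simp [xh]
        rw [h0]
        exact hXs.of_norm.hasSum
      · intro k hk
        have : ¬ 0 ≤ k := fun h => hk ⟨k.toNat, by simp [h]⟩
        simp [xh, this]
    have hsum := hX.add hT
    have hinj : Function.Injective (fun l : ℕ => -(l : ℤ)) := by
      intro a b h
      simpa using h
    rw [← hinj.hasSum_iff] at hsum
    · rw [add_mul, one_mul, ← hsum.tsum_eq]
      congr 1
      ext l
      simp only [Function.comp, zpow_neg, zpow_natCast, inv_pow, ← smul_add]
      congr 1
      by_cases hl : l = 0
      · have := hxe 0
        subst hl
        simpa [xh, y, t, dlt] using this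
      · have : ¬ (l : ℤ) ≤ 0 := by omega
        simp [xh, y, hl]
    · intro k hk
      have hk : 0 < k := by
        by_contra h
        exact hk ⟨k.natAbs, by dsimp only; omega⟩
      obtain ⟨m, rfl⟩ := Int.eq_ofNat_of_zero_le hk.le
      have hm : m ≠ 0 := by
        rintro rfl
        simp at hk
      have := hxe m
      rw [← smul_add]
      simp only [xh, t]
      simp only [Int.natCast_nonneg, if_true, Int.toNat_natCast, this]
      simp [dlt, hm]

end toeplitz
end Birk


namespace Birk

section matrices
attribute [local instance] Matrix.linftyOpNormedRing Matrix.linftyOpNormedAlgebra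

variable {n : ℕ}

lemma mat_diffAt (F : ℂ → Matrix (Fin n) (Fin n) ℂ) (z : ℂ) :
    DifferentiableAt ℂ F z ↔ ∀ i j, DifferentiableAt ℂ (fun z => F z i j) z := by
  constructor
  · intro h i j
    let L : Matrix (Fin n) (Fin n) ℂ →L[ℂ] ℂ := LinearMap.toContinuousLinearMap
      (Matrix.entryLinearMap ℂ ℂ i j)
    exact L.differentiableAt.comp z h
  · intro h
    have : F = fun z => ∑ i, ∑ j, F z i j • Matrix.single i j (1 : ℂ) := by
      funext w
      conv_lhs => rw [Matrix.matrix_eq_sum_single (F w)]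
      simp [Matrix.smul_single]
    rw [this]
    refine DifferentiableAt.fun_sum fun i _ => DifferentiableAt.fun_sum fun j _ => ?_
    exact (h i j).smul_const _

lemma mat_diff (F : ℂ → Matrix (Fin n) (Fin n) ℂ) :
    Differentiable ℂ F ↔ ∀ i j, Differentiable ℂ (fun z => F z i j) :=
  ⟨fun h i j z => (mat_diffAt F z).1 (h z) i j, fun h z => (mat_diffAt F z).2 fun i j => h i j z⟩

lemma mat_diffOn (F : ℂ → Matrix (Fin n) (Fin n) ℂ) :
    DifferentiableOn ℂ F {z : ℂ | z ≠ 0} ↔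
      ∀ i j, DifferentiableOn ℂ (fun z => F z i j) {z : ℂ | z ≠ 0} := by
  have ho : IsOpen {z : ℂ | z ≠ 0} := isOpen_ne
  constructor
  · intro h i j z hz
    exact ((mat_diffAt F z).1 ((h z hz).differentiableAt (ho.mem_nhds hz)) i j).differentiableWithinAt
  · intro h z hz
    exact ((mat_diffAt F z).2 fun i j =>
      ((h i j z hz).differentiableAt (ho.mem_nhds hz))).differentiableWithinAt

lemma mat_entry_le (M : Matrix (Fin n) (Fin n) ℂ) (i j : Fin n) : ‖M i j‖ ≤ ‖M‖ := by
  rw [Matrix.linfty_opNorm_def, ← coe_nnnorm, NNReal.coe_le_coe]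
  refine le_trans ?_ (Finset.le_sup (f := fun i => ∑ j, ‖M i j‖₊) (Finset.mem_univ i))
  exact Finset.single_le_sum (f := fun j => ‖M i j‖₊) (fun _ _ => zero_le) (Finset.mem_univ j)

lemma mat_norm_le (M : Matrix (Fin n) (Fin n) ℂ) {C : ℝ} (hC : 0 ≤ C) (h : ∀ i j, ‖M i j‖ ≤ C) :
    ‖M‖ ≤ n * C := by
  lift C to NNReal using hC
  rw [Matrix.linfty_opNorm_def]
  have : (n : ℝ) * C = ((n * C : NNReal) : ℝ) := by simp
  rw [this, NNReal.coe_le_coe]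
  refine Finset.sup_le fun i _ => ?_
  calc ∑ j, ‖M i j‖₊ ≤ ∑ j : Fin n, C := Finset.sum_le_sum fun j _ => h i j
    _ = n * C := by simp

lemma mat_norm_one : ‖(1 : Matrix (Fin n) (Fin n) ℂ)‖ ≤ 1 := by
  rcases Nat.eq_zero_or_pos n with rfl | hn
  · rw [Subsingleton.elim (1 : Matrix (Fin 0) (Fin 0) ℂ) 0]
    simp
  · have : Nonempty (Fin n) := ⟨⟨0, hn⟩⟩
    simp

lemma laurent_matrix (F : ℂ → Matrix (Fin n) (Fin n) ℂ)
    (hF : DifferentiableOn ℂ F {z : ℂ | z ≠ 0}) :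
    ∃ c : ℤ → Matrix (Fin n) (Fin n) ℂ,
      (∀ z : ℂ, z ≠ 0 → HasSum (fun k => z ^ k • c k) (F z)) ∧
      (∀ r M : ℝ, 0 < r → (∀ z : ℂ, ‖z‖ = r → ‖F z‖ ≤ M) → ∀ k, ‖c k‖ ≤ n * M * r ^ (-k)) := by
  have h := fun i j => laurent_scalar (fun z => F z i j) ((mat_diffOn F).1 hF i j)
  choose c hc hb using h
  refine ⟨fun k => Matrix.of fun i j => c i j k, fun z hz => ?_, fun r M hr hM k => ?_⟩
  · refine Pi.hasSum.2 fun i => Pi.hasSum.2 fun j => ?_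
    simpa [mul_comm] using hc i j z hz
  · have hM0 : 0 ≤ M := (norm_nonneg _).trans (hM (r : ℂ) (by simp [hr.le]))
    rw [mul_assoc]
    refine mat_norm_le _ (by positivity) fun i j => ?_
    exact hb i j r M hr (fun z hz => (mat_entry_le _ i j).trans (hM z hz)) k

lemma mat_bdd_circle (F : ℂ → Matrix (Fin n) (Fin n) ℂ)
    (hF : DifferentiableOn ℂ F {z : ℂ | z ≠ 0}) {r : ℝ} (hr : 0 < r) :
    ∃ M, 0 ≤ M ∧ ∀ z : ℂ, ‖z‖ = r → ‖F z‖ ≤ M := by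
  have hc : ContinuousOn F (Metric.sphere 0 r) := by
    apply hF.continuousOn.mono
    intro z hz
    rintro rfl
    simp at hz
    exact hr.ne hz
  obtain ⟨M, hM⟩ := (isCompact_sphere (0 : ℂ) r).exists_bound_of_continuousOn hc
  exact ⟨|M|, abs_nonneg _, fun z hz => (hM z (by simpa using hz)).trans (le_abs_self _)⟩

lemma mat_inv_diffOn (f : ℂ → Matrix (Fin n) (Fin n) ℂ) {s : Set ℂ}
    (hf : DifferentiableOn ℂ f s)
    (hfu : ∀ z ∈ s, IsUnit (f z)) : DifferentiableOn ℂ (fun z => (f z)⁻¹) s := by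
  intro z hz
  have h := differentiableAt_inverse (𝕜 := ℂ) (hfu z hz)
  have h2 := h.comp_differentiableWithinAt z (hf z hz)
  have h3 : (fun z => (f z)⁻¹) = Ring.inverse ∘ f := by
    funext w
    simp [Matrix.nonsing_inv_eq_ringInverse]
  rw [h3]
  exact h2

lemma section_exist (f : ℂ → Matrix (Fin n) (Fin n) ℂ)
    (hf : DifferentiableOn ℂ f {z : ℂ | z ≠ 0})
    (hfu : ∀ z : ℂ, z ≠ 0 → IsUnit (f z)) :
    ∃ (K : ℕ) (P Q : ℂ → Matrix (Fin n) (Fin n) ℂ), Differentiable ℂ P ∧ Differentiable ℂ Q ∧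
      IsUnit (P (1 / 2)) ∧ ∀ z : ℂ, z ≠ 0 → P z = z ^ K • (f z * Q z⁻¹) := by
  have ho : IsOpen {z : ℂ | z ≠ 0} := isOpen_ne
  set g : ℂ → Matrix (Fin n) (Fin n) ℂ := fun z => (f z)⁻¹ with hg
  have hgd : DifferentiableOn ℂ g {z : ℂ | z ≠ 0} := mat_inv_diffOn f hf hfu
  have hgf : ∀ z : ℂ, z ≠ 0 → g z * f z = 1 := fun z hz =>
    Matrix.nonsing_inv_mul _ ((Matrix.isUnit_iff_isUnit_det _).1 (hfu z hz))
  have hfg : ∀ z : ℂ, z ≠ 0 → f z * g z = 1 := fun z hz =>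
    Matrix.mul_nonsing_inv _ ((Matrix.isUnit_iff_isUnit_det _).1 (hfu z hz))
  obtain ⟨B1, hB10, hB1⟩ := mat_bdd_circle g hgd (r := 2) (by norm_num)
  obtain ⟨B2, hB20, hB2⟩ := mat_bdd_circle g hgd (r := 1 / 2) (by norm_num)
  set B := B1 + B2 + 1 with hB
  have hBpos : 0 < B := by positivity
  set S := ∑' k : ℤ, (1 / 2 : ℝ) ^ k.natAbs with hS
  have hSs := summable_two_sided (1 / 2) (by norm_num) (by norm_num)
  have hSnn : 0 ≤ S := tsum_nonneg fun _ => by positivity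
  set ε : ℝ := 1 / (16 * (n + 1) * (S + 1)) with hε
  have hε0 : 0 < ε := by positivity
  have hεS : n * (ε + ε) * S ≤ 1 / 8 := by
    have : ε * (16 * (n + 1) * (S + 1)) = 1 := by rw [hε]; field_simp
    nlinarith [mul_nonneg hε0.le hSnn, mul_nonneg hε0.le (Nat.cast_nonneg (α := ℝ) n),
      mul_nonneg (mul_nonneg hε0.le hSnn) (Nat.cast_nonneg (α := ℝ) n)]
  have hε1 : ε < 1 := by
    rw [hε, div_lt_one (by positivity)]
    nlinarith [mul_nonneg hSnn (Nat.cast_nonneg (α := ℝ) n), (Nat.cast_nonneg (α := ℝ) n)]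
  obtain ⟨a, ha, hab⟩ := laurent_matrix f hf
  have hasum : ∀ r : ℝ, 0 < r → Summable fun k : ℤ => ‖a k‖ * r ^ k := by
    intro r hr
    obtain ⟨M1, hM10, hM1⟩ := mat_bdd_circle f hf (r := 2 * r) (by positivity)
    obtain ⟨M2, hM20, hM2⟩ := mat_bdd_circle f hf (r := r / 2) (by positivity)
    refine Summable.of_nonneg_of_le (fun k => by positivity) (fun k => ?_)
      (hSs.mul_left (n * M1 + n * M2))
    exact two_sided_bound hr k (hab _ _ (by positivity) hM1 k) (hab _ _ (by positivity) hM2 k)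
      (by positivity) (by positivity)
  -- truncation
  have hunif := tendstoUniformlyOn_tsum (f := fun (k : ℤ) (z : ℂ) => z ^ k • a k)
    (s := {z : ℂ | ‖z‖ = 2 ∨ ‖z‖ = 1 / 2})
    ((hasum 2 (by norm_num)).add (hasum (1 / 2) (by norm_num))) (by
      intro k z hz
      rw [norm_smul, norm_zpow, mul_comm]
      rcases hz with hz | hz <;> rw [hz]
      · exact le_add_of_nonneg_right (by positivity)
      · exact le_add_of_nonneg_left (by positivity))
  rw [Metric.tendstoUniformlyOn_iff] at hunif
  obtain ⟨T, hT⟩ := (hunif (ε / B) (by positivity)).exists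
  set R : ℂ → Matrix (Fin n) (Fin n) ℂ := fun z => ∑ k ∈ T, z ^ k • a k with hR
  have hRf : ∀ z : ℂ, (‖z‖ = 2 ∨ ‖z‖ = 1 / 2) → ‖R z - f z‖ ≤ ε / B := by
    intro z hz
    have hz0 : z ≠ 0 := by
      rintro rfl
      norm_num at hz
    have := hT z hz
    erw [(ha z hz0).tsum_eq] at this
    rw [dist_comm, dist_eq_norm] at this
    exact this.le
  set E : ℂ → Matrix (Fin n) (Fin n) ℂ := fun z => g z * R z - 1 with hE
  have hEb : ∀ z : ℂ, (‖z‖ = 2 ∨ ‖z‖ = 1 / 2) → ‖E z‖ ≤ ε := by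
    intro z hz
    have hz0 : z ≠ 0 := by
      rintro rfl
      norm_num at hz
    have hgB : ‖g z‖ ≤ B := by
      rcases hz with hz | hz
      · linarith [hB1 z hz]
      · linarith [hB2 z hz]
    have : E z = g z * (R z - f z) := by rw [mul_sub, hgf z hz0]
    rw [this]
    calc ‖g z * (R z - f z)‖ ≤ ‖g z‖ * ‖R z - f z‖ := norm_mul_le _ _
      _ ≤ B * (ε / B) := by
        gcongr
        exact hRf z hz
      _ = ε := by field_simp
  have hRd : DifferentiableOn ℂ R {z : ℂ | z ≠ 0} := by
    intro z hz
    refine DifferentiableWithinAt.fun_sum fun k _ => ?_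
    exact ((differentiableAt_zpow.2 (Or.inl hz)).differentiableWithinAt).smul_const _
  have hEd : DifferentiableOn ℂ E {z : ℂ | z ≠ 0} := (hgd.mul hRd).sub_const _
  obtain ⟨e, he, heb⟩ := laurent_matrix E hEd
  have hele : ∀ k : ℤ, ‖e k‖ ≤ (n * (ε + ε)) * (1 / 2 : ℝ) ^ k.natAbs := by
    intro k
    have h1 := heb 2 ε (by norm_num) (fun z hz => hEb z (Or.inl hz)) k
    have h2 := heb (1 / 2) ε (by norm_num) (fun z hz => hEb z (Or.inr hz)) k
    have := two_sided_bound (r := 1) one_pos k (by simpa using h1) (by simpa using h2)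
      (by positivity) (by positivity)
    simpa [mul_add] using this
  have hesum : Summable fun k => ‖e k‖ :=
    Summable.of_nonneg_of_le (fun _ => norm_nonneg _) hele (hSs.mul_left _)
  have hetsum : ∑' k, ‖e k‖ ≤ 1 / 8 := by
    refine (hesum.tsum_le_tsum hele (hSs.mul_left _)).trans ?_
    rw [tsum_mul_left]
    exact hεS
  obtain ⟨Np, Q, hNp, hQ, hNh, hNQ⟩ := splitting mat_norm_one e hesum hetsum
    (fun s hs => by
      obtain ⟨M, -, hM⟩ := mat_bdd_circle E hEd hs
      exact ⟨n * M, heb s M hs hM⟩) E he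
  -- the common denominator
  obtain ⟨K, hK⟩ : ∃ K : ℕ, ∀ k ∈ T, 0 ≤ k + K := by
    refine ⟨∑ k ∈ T, k.natAbs, fun k hk => ?_⟩
    have : k.natAbs ≤ ∑ k ∈ T, k.natAbs :=
      Finset.single_le_sum (f := fun k : ℤ => k.natAbs) (fun _ _ => Nat.zero_le _) hk
    omega
  set R0 : ℂ → Matrix (Fin n) (Fin n) ℂ := fun z => ∑ k ∈ T, z ^ (k + K).toNat • a k with hR0
  have hR0d : Differentiable ℂ R0 := by
    intro z
    refine DifferentiableAt.fun_sum fun k _ => ?_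
    fun_prop
  have hR0R : ∀ z : ℂ, z ≠ 0 → R0 z = z ^ K • R z := by
    intro z hz
    simp only [hR0, hR, Finset.smul_sum]
    refine Finset.sum_congr rfl fun k hk => ?_
    rw [smul_smul, ← zpow_natCast z K, ← zpow_add₀ hz, ← zpow_natCast, Int.toNat_of_nonneg (hK k hk),
      add_comm]
  have hkey : ∀ z : ℂ, z ≠ 0 → ‖z‖ < 1 → R0 z * Np z = z ^ K • (f z * Q z⁻¹) := by
    intro z hz hz1
    rw [← hNQ z hz hz1, hR0R z hz]
    simp only [hE, add_sub_cancel]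
    rw [← mul_assoc, ← mul_assoc, hfg z hz, one_mul, smul_mul_assoc]
  refine ⟨K, fun z => if z = 0 then R0 0 * Np 0 else z ^ K • (f z * Q z⁻¹), Q, ?_, hQ, ?_, ?_⟩
  · intro z
    by_cases hz : z = 0
    · subst hz
      have hd : DifferentiableAt ℂ (fun z => R0 z * Np z) 0 :=
        (hR0d 0).mul ((hNp 0 (by simp)).differentiableAt (Metric.isOpen_ball.mem_nhds (by simp)))
      refine hd.congr_of_eventuallyEq ?_
      filter_upwards [Metric.ball_mem_nhds (0 : ℂ) one_pos] with w hw
      split_ifs with h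
      · rw [h]
      · exact (hkey w h (by simpa using hw)).symm
    · have hd : DifferentiableAt ℂ (fun z => z ^ K • (f z * Q z⁻¹)) z := by
        have h1 : DifferentiableAt ℂ f z := (hf z hz).differentiableAt (ho.mem_nhds hz)
        have h2 : DifferentiableAt ℂ (fun z => Q z⁻¹) z :=
          (hQ z⁻¹).comp z (differentiableAt_inv hz)
        exact (differentiableAt_pow K).smul (h1.mul h2)
      refine hd.congr_of_eventuallyEq ?_
      filter_upwards [ho.mem_nhds hz] with w hw
      simp only [if_neg (show ¬ w = 0 from hw)]
  · have h0 : (1 / 2 : ℂ) ≠ 0 := by norm_num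
    have hh : ‖(1 / 2 : ℂ)‖ = 1 / 2 := by norm_num
    simp only [if_neg h0]
    rw [← hkey _ h0 (by rw [hh]; norm_num), hR0R _ h0]
    have hu1 : IsUnit (Np (1 / 2)) := by
      have := isUnit_one_sub_of_norm_lt_one (x := 1 - Np (1 / 2)) (by rwa [norm_sub_rev])
      simpa using this
    have hu2 : IsUnit (R (1 / 2)) := by
      have h3 : IsUnit (g (1 / 2) * R (1 / 2)) := by
        have := isUnit_one_sub_of_norm_lt_one (x := -E (1 / 2))
          (by rw [norm_neg]; exact (hEb _ (Or.inr hh)).trans_lt hε1)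
        simpa [hE] using this
      have h4 : R (1 / 2) = f (1 / 2) * (g (1 / 2) * R (1 / 2)) := by
        rw [← mul_assoc, hfg _ h0, one_mul]
      rw [h4]
      exact (hfu _ h0).mul h3
    refine IsUnit.mul ?_ hu1
    have : ((1 / 2 : ℂ) ^ K • R (1 / 2)) = (Units.mk0 ((1 / 2 : ℂ) ^ K) (pow_ne_zero _ h0)) • R (1 / 2) := rfl
    rw [this]
    exact hu2.smul _
  · intro z hz
    simp [hz]

end matrices
end Birk


namespace Birk

section final
variable {n : ℕ}

lemma norm_comap_eq : comap (fun z : ℂ => ‖z‖) atTop = cocompact ℂ := by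
  rw [comap_norm_atTop, Metric.cobounded_eq_cocompact]

lemma liouville_zpow (h b : ℂ → ℂ) (hh : Differentiable ℂ h) (N : ℤ) (hN : N < 0) (L : ℂ)
    (hb : Tendsto b (cocompact ℂ) (nhds L)) (heq : ∀ z : ℂ, z ≠ 0 → h z = z ^ N * b z) (w : ℂ) :
    h w = 0 := by
  apply hh.apply_eq_of_tendsto_cocompact
  obtain ⟨k, hk⟩ : ∃ k : ℕ, N = -((k + 1 : ℕ) : ℤ) := ⟨(-N - 1).toNat, by omega⟩
  have h1 : Tendsto (fun z : ℂ => z⁻¹ ^ (k + 1) * b z) (cocompact ℂ) (nhds (0 ^ (k + 1) * L)) :=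
    (tendsto_inv₀_cobounded.mono_left (Metric.cobounded_eq_cocompact (α := ℂ)).ge |>.pow _).mul hb
  rw [zero_pow (by omega), zero_mul] at h1
  refine h1.congr' ?_
  have h0 : ∀ᶠ z : ℂ in cocompact ℂ, z ≠ 0 := by
    rw [← Metric.cobounded_eq_cocompact]
    exact Bornology.eventually_ne_cobounded 0
  filter_upwards [h0] with z hz
  rw [heq z hz, hk, zpow_neg, zpow_natCast, inv_pow]

lemma det_differentiable (M : ℂ → Matrix (Fin n) (Fin n) ℂ)
    (hM : ∀ i j, Differentiable ℂ fun z => M z i j) : Differentiable ℂ fun z => (M z).det := by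
  simp only [Matrix.det_apply]
  refine Differentiable.fun_sum fun σ _ => ?_
  refine Differentiable.const_smul ?_ _
  exact Differentiable.fun_finsetProd fun i _ => hM _ _

lemma prod_zpow_sum {ι : Type*} (z : ℂ) (hz : z ≠ 0) (m : ι → ℤ) (s : Finset ι) :
    ∏ i ∈ s, z ^ m i = z ^ ∑ i ∈ s, m i := by
  classical
  induction s using Finset.induction_on with
  | empty => simp
  | insert a s ha ih => rw [Finset.prod_insert ha, Finset.sum_insert ha, ih, zpow_add₀ hz]

/-- A full system of sections: `p j` entire, `q j` entire in the variable `1/z`. -/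
structure IsDatum (f : ℂ → Matrix (Fin n) (Fin n) ℂ) (p q : Fin n → ℂ → (Fin n → ℂ))
    (m : Fin n → ℤ) : Prop where
  hp : ∀ j, Differentiable ℂ (p j)
  hq : ∀ j, Differentiable ℂ (q j)
  hdet : (Matrix.of fun j => p j (1 / 2)).det ≠ 0
  heq : ∀ z : ℂ, z ≠ 0 → ∀ j, p j z = z ^ m j • (f z).mulVec (q j z⁻¹)

lemma datum_mat {f : ℂ → Matrix (Fin n) (Fin n) ℂ} {p q : Fin n → ℂ → (Fin n → ℂ)}
    {m : Fin n → ℤ} (heq : ∀ z : ℂ, z ≠ 0 → ∀ j, p j z = z ^ m j • (f z).mulVec (q j z⁻¹))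
    (z : ℂ) (hz : z ≠ 0) :
    (Matrix.of fun j => p j z).transpose =
      f z * (Matrix.of fun j => q j z⁻¹).transpose * Matrix.diagonal fun j => z ^ m j := by
  ext i j
  rw [Matrix.mul_diagonal]
  simp [heq z hz j, Matrix.mul_apply, Matrix.mulVec, dotProduct, mul_comm]

lemma datum_det {f : ℂ → Matrix (Fin n) (Fin n) ℂ} {p q : Fin n → ℂ → (Fin n → ℂ)}
    {m : Fin n → ℤ} (heq : ∀ z : ℂ, z ≠ 0 → ∀ j, p j z = z ^ m j • (f z).mulVec (q j z⁻¹))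
    (z : ℂ) (hz : z ≠ 0) :
    (Matrix.of fun j => p j z).det =
      (f z).det * (Matrix.of fun j => q j z⁻¹).det * z ^ (∑ j, m j) := by
  have h := congrArg Matrix.det (datum_mat heq z hz)
  rw [Matrix.det_transpose, Matrix.det_mul, Matrix.det_mul, Matrix.det_transpose,
    Matrix.det_diagonal] at h
  rw [h]
  congr 1
  exact prod_zpow_sum z hz m Finset.univ

lemma dslope_diff (F : ℂ → (Fin n → ℂ)) (hF : Differentiable ℂ F) (c : ℂ) :
    Differentiable ℂ (dslope F c) := by
  rw [← differentiableOn_univ, Complex.differentiableOn_dslope univ_mem, differentiableOn_univ]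
  exact hF

lemma exists_max_coeff (c : Fin n → ℂ) (hc : c ≠ 0) (m : Fin n → ℤ) :
    ∃ i, c i ≠ 0 ∧ ∀ j, c j ≠ 0 → m j ≤ m i := by
  classical
  obtain ⟨i0, hi0⟩ := Function.ne_iff.1 hc
  obtain ⟨i, hi, hmax⟩ := Finset.exists_max_image (Finset.univ.filter fun j => c j ≠ 0) m
    ⟨i0, by simpa using hi0⟩
  exact ⟨i, by simpa using hi, fun j hj => hmax j (by simpa using hj)⟩

lemma sum_update_lt (m : Fin n → ℤ) (i : Fin n) :
    ∑ j, Function.update m i (m i - 1) j < ∑ j, m j := by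
  apply Finset.sum_lt_sum
  · intro j _
    by_cases h : j = i
    · subst h; simp
    · simp [h]
  · exact ⟨i, Finset.mem_univ i, by simp⟩

lemma of_update (p : Fin n → ℂ → (Fin n → ℂ)) (i : Fin n) (p' : ℂ → (Fin n → ℂ)) (z : ℂ) :
    (Matrix.of fun j => Function.update p i p' j z) =
      (Matrix.of fun j => p j z).updateRow i (p' z) := by
  ext j k
  by_cases h : j = i
  · subst h; simp
  · simp [h]

lemma reduce_p {f : ℂ → Matrix (Fin n) (Fin n) ℂ}
    (hfu : ∀ z : ℂ, z ≠ 0 → IsUnit (f z))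
    (hgd : ∀ i j, DifferentiableOn ℂ (fun z => (f z)⁻¹ i j) {z : ℂ | z ≠ 0})
    {p q : Fin n → ℂ → (Fin n → ℂ)} {m : Fin n → ℤ} (hD : IsDatum f p q m) (z0 : ℂ)
    (hz0 : (Matrix.of fun j => p j z0).det = 0) :
    ∃ p' q' m', IsDatum f p' q' m' ∧ ∑ j, m' j < ∑ j, m j := by
  have ho : IsOpen {z : ℂ | z ≠ 0} := isOpen_ne
  obtain ⟨c, hc, hc0⟩ := Matrix.exists_vecMul_eq_zero_iff.2 hz0
  obtain ⟨i, hci, hmax⟩ := exists_max_coeff c hc m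
  have hne : (1 / 2 : ℂ) ≠ z0 := by
    rintro rfl
    exact hD.hdet hz0
  set F : ℂ → (Fin n → ℂ) := fun z => ∑ j, c j • p j z with hF
  have hFd : Differentiable ℂ F := Differentiable.fun_sum fun j _ => (hD.hp j).fun_const_smul _
  have hF0 : F z0 = 0 := by
    rw [← hc0]
    ext k
    simp [hF, Matrix.vecMul, dotProduct]
  set p' : ℂ → (Fin n → ℂ) := dslope F z0 with hp'
  have hp'd : Differentiable ℂ p' := dslope_diff F hFd z0
  have hp'eq : ∀ z, z ≠ z0 → p' z = (z - z0)⁻¹ • F z := by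
    intro z hz
    rw [hp', dslope_of_ne _ hz, slope, hF0, vsub_eq_sub, sub_zero]
  set φ : ℂ → (Fin n → ℂ) := fun u => (1 - z0 * u)⁻¹ •
    ∑ j, c j • u ^ (m i - m j).toNat • q j u with hφ
  have hφd : DifferentiableAt ℂ φ 0 := by
    have h1 : DifferentiableAt ℂ (fun u : ℂ => (1 - z0 * u)⁻¹) 0 := by
      apply DifferentiableAt.inv
      · fun_prop
      · simp
    refine h1.smul ?_
    refine DifferentiableAt.fun_sum fun j _ => ?_
    exact ((differentiableAt_pow (𝕜 := ℂ) _).fun_smul (hD.hq j 0)).fun_const_smul (c j)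
  set q' : ℂ → (Fin n → ℂ) := fun u => if u = 0 then φ 0 else
    u ^ (m i - 1) • ((f u⁻¹)⁻¹).mulVec (p' u⁻¹) with hq'
  have hinv : ∀ z : ℂ, z ≠ 0 → (f z)⁻¹ * f z = 1 := fun z hz =>
    Matrix.nonsing_inv_mul _ ((Matrix.isUnit_iff_isUnit_det _).1 (hfu z hz))
  have hinv' : ∀ z : ℂ, z ≠ 0 → f z * (f z)⁻¹ = 1 := fun z hz =>
    Matrix.mul_nonsing_inv _ ((Matrix.isUnit_iff_isUnit_det _).1 (hfu z hz))
  have hq'd : Differentiable ℂ q' := by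
    intro u
    by_cases hu : u = 0
    · subst hu
      refine hφd.congr_of_eventuallyEq ?_
      have hcont : ContinuousAt (fun u : ℂ => 1 - z0 * u) 0 := by fun_prop
      have hev : ∀ᶠ u in nhds (0 : ℂ), 1 - z0 * u ≠ 0 := hcont.eventually_ne (by simp)
      filter_upwards [hev] with u hu1
      by_cases hu : u = 0
      · simp [hq', hu]
      · have hui : u⁻¹ ≠ 0 := inv_ne_zero hu
        have hne' : u⁻¹ ≠ z0 := by
          rintro rfl
          exact hu1 (by field_simp; simp)
        simp only [hq', if_neg hu]
        rw [hp'eq _ hne']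
        simp only [hF, hφ]
        rw [Matrix.mulVec_smul, smul_smul, Matrix.mulVec_sum, Finset.smul_sum, Finset.smul_sum]
        refine Finset.sum_congr rfl fun j _ => ?_
        by_cases hcj : c j = 0
        · simp [hcj]
        · rw [hD.heq _ hui j, Matrix.mulVec_smul, Matrix.mulVec_smul, Matrix.mulVec_mulVec,
            hinv _ hui, Matrix.one_mulVec, inv_inv, ← zpow_natCast,
            Int.toNat_of_nonneg (sub_nonneg.2 (hmax j hcj)), smul_smul, smul_smul, smul_smul,
            smul_smul]
          congr 1
          rw [zpow_sub₀ hu, zpow_sub₀ hu, inv_zpow]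
          have : u⁻¹ - z0 = u⁻¹ * (1 - z0 * u) := by field_simp
          rw [this, mul_inv, inv_inv]
          have h3 : u ^ m j ≠ 0 := zpow_ne_zero _ hu
          field_simp
    · have hui : u⁻¹ ≠ 0 := inv_ne_zero hu
      have hd : DifferentiableAt ℂ (fun u : ℂ => u ^ (m i - 1) • ((f u⁻¹)⁻¹).mulVec (p' u⁻¹)) u := by
        refine (differentiableAt_zpow.2 (Or.inl hu)).smul ?_
        rw [differentiableAt_pi]
        intro k
        simp only [Matrix.mulVec, dotProduct]
        refine DifferentiableAt.fun_sum fun l _ => ?_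
        have hi : DifferentiableAt ℂ (fun u : ℂ => u⁻¹) u := differentiableAt_inv hu
        have h1 : DifferentiableAt ℂ (fun z => (f z)⁻¹ k l) u⁻¹ :=
          (hgd k l _ hui).differentiableAt (ho.mem_nhds hui)
        have h2 : DifferentiableAt ℂ (fun z => p' z l) u⁻¹ := differentiableAt_pi.1 (hp'd u⁻¹) l
        exact (h1.comp u hi).mul (h2.comp u hi)
      refine hd.congr_of_eventuallyEq ?_
      filter_upwards [ho.mem_nhds hu] with w hw
      simp only [hq', if_neg (show ¬ w = 0 from hw)]
  refine ⟨Function.update p i p', Function.update q i q', Function.update m i (m i - 1),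
    ⟨?_, ?_, ?_, ?_⟩, sum_update_lt m i⟩
  · intro j
    by_cases h : j = i
    · subst h; simpa using hp'd
    · simpa [h] using hD.hp j
  · intro j
    by_cases h : j = i
    · subst h; simpa using hq'd
    · simpa [h] using hD.hq j
  · rw [of_update, hp'eq _ hne, Matrix.det_updateRow_smul]
    have := Matrix.det_updateRow_sum (Matrix.of fun j => p j (1 / 2)) i c
    refine mul_ne_zero (inv_ne_zero (sub_ne_zero.2 hne)) ?_
    refine ne_of_eq_of_ne this ?_
    exact mul_ne_zero hci hD.hdet
  · intro z hz j
    by_cases h : j = i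
    · subst h
      simp only [Function.update_self, hq', if_neg (inv_ne_zero hz), inv_inv]
      rw [Matrix.mulVec_smul, Matrix.mulVec_mulVec, hinv' z hz, Matrix.one_mulVec, smul_smul,
        inv_zpow, mul_inv_cancel₀ (zpow_ne_zero _ hz), one_smul]
    · simpa [h] using hD.heq z hz j

lemma reduce_q {f : ℂ → Matrix (Fin n) (Fin n) ℂ}
    {p q : Fin n → ℂ → (Fin n → ℂ)} {m : Fin n → ℤ} (hD : IsDatum f p q m)
    (hq0 : (Matrix.of fun j => q j 0).det = 0) :
    ∃ p' q' m', IsDatum f p' q' m' ∧ ∑ j, m' j < ∑ j, m j := by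
  obtain ⟨c, hc, hc0⟩ := Matrix.exists_vecMul_eq_zero_iff.2 hq0
  obtain ⟨i, hci, hmax⟩ := exists_max_coeff c hc m
  set F : ℂ → (Fin n → ℂ) := fun z => ∑ j, c j • q j z with hF
  have hFd : Differentiable ℂ F := Differentiable.fun_sum fun j _ => (hD.hq j).fun_const_smul _
  have hF0 : F 0 = 0 := by
    rw [← hc0]
    ext k
    simp [hF, Matrix.vecMul, dotProduct]
  set q' : ℂ → (Fin n → ℂ) := dslope F 0 with hq'
  have hq'd : Differentiable ℂ q' := dslope_diff F hFd 0
  have hq'eq : ∀ z, z ≠ 0 → q' z = z⁻¹ • F z := by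
    intro z hz
    rw [hq', dslope_of_ne _ hz, slope, hF0, vsub_eq_sub, sub_zero, sub_zero]
  set p' : ℂ → (Fin n → ℂ) := fun z => ∑ j, (c j * z ^ (m i - m j).toNat) • p j z with hp'
  have hp'd : Differentiable ℂ p' := by
    refine Differentiable.fun_sum fun j _ => ?_
    exact ((differentiable_pow _).const_mul (c j)).smul (hD.hp j)
  refine ⟨Function.update p i p', Function.update q i q', Function.update m i (m i - 1),
    ⟨?_, ?_, ?_, ?_⟩, sum_update_lt m i⟩
  · intro j
    by_cases h : j = i
    · subst h; simpa using hp'd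
    · simpa [h] using hD.hp j
  · intro j
    by_cases h : j = i
    · subst h; simpa using hq'd
    · simpa [h] using hD.hq j
  · rw [of_update]
    have := Matrix.det_updateRow_sum (Matrix.of fun j => p j (1 / 2)) i
      (fun j => c j * (1 / 2 : ℂ) ^ (m i - m j).toNat)
    refine ne_of_eq_of_ne this ?_
    exact mul_ne_zero (by simpa using hci) hD.hdet
  · intro z hz j
    by_cases h : j = i
    · subst h
      simp only [Function.update_self]
      rw [hq'eq _ (inv_ne_zero hz), Matrix.mulVec_smul, smul_smul, Matrix.mulVec_sum,
        Finset.smul_sum]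
      refine Finset.sum_congr rfl fun k _ => ?_
      by_cases hck : c k = 0
      · simp [hck]
      · rw [hD.heq z hz k, Matrix.mulVec_smul, smul_smul, smul_smul, ← zpow_natCast,
          Int.toNat_of_nonneg (sub_nonneg.2 (hmax k hck))]
        congr 1
        rw [zpow_sub₀ hz, zpow_sub₀ hz, inv_inv]
        have h3 : z ^ m k ≠ 0 := zpow_ne_zero _ hz
        field_simp
    · simpa [h] using hD.heq z hz j

end final
end Birk


namespace Birk

section conclude
attribute [local instance] Matrix.linftyOpNormedRing Matrix.linftyOpNormedAlgebra
variable {n : ℕ}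

lemma inv_entries_diffOn (f : ℂ → Matrix (Fin n) (Fin n) ℂ)
    (hfd : ∀ i j, DifferentiableOn ℂ (fun z => f z i j) {z : ℂ | z ≠ 0})
    (hfu : ∀ z : ℂ, z ≠ 0 → IsUnit (f z)) :
    ∀ i j, DifferentiableOn ℂ (fun z => (f z)⁻¹ i j) {z : ℂ | z ≠ 0} :=
  (mat_diffOn _).1 (mat_inv_diffOn f ((mat_diffOn f).2 hfd) hfu)

lemma inv_entries_diff (f : ℂ → Matrix (Fin n) (Fin n) ℂ)
    (hfd : ∀ i j, Differentiable ℂ (fun z => f z i j))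
    (hfu : ∀ z : ℂ, IsUnit (f z)) :
    ∀ i j, Differentiable ℂ (fun z => (f z)⁻¹ i j) :=
  (mat_diff _).1 (differentiableOn_univ.1
    (mat_inv_diffOn f (differentiableOn_univ.2 ((mat_diff f).2 hfd)) (fun z _ => hfu z)))

lemma tendsto_inv_entries {α : Type*} {l : Filter α} (F : α → Matrix (Fin n) (Fin n) ℂ)
    (L : Matrix (Fin n) (Fin n) ℂ) (hL : IsUnit L)
    (h : ∀ i j, Tendsto (fun z => F z i j) l (nhds (L i j))) (i j : Fin n) :
    Tendsto (fun z => (F z)⁻¹ i j) l (nhds (L⁻¹ i j)) := by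
  have h1 : Tendsto F l (nhds L) := tendsto_pi_nhds.2 fun i => tendsto_pi_nhds.2 fun j => h i j
  obtain ⟨U, rfl⟩ := hL
  have h2 := (NormedRing.inverse_continuousAt U).tendsto.comp h1
  have h3 : Tendsto (fun z => (F z)⁻¹) l (nhds ((U : Matrix (Fin n) (Fin n) ℂ)⁻¹)) := by
    have e1 : (fun z => (F z)⁻¹) = Ring.inverse ∘ F := by
      funext w
      simp [Matrix.nonsing_inv_eq_ringInverse]
    rw [e1, Matrix.nonsing_inv_eq_ringInverse]
    exact h2
  exact tendsto_pi_nhds.1 (tendsto_pi_nhds.1 h3 i) j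

/-- Existence of one datum. -/
lemma exists_datum (f : ℂ → Matrix (Fin n) (Fin n) ℂ)
    (hfd : ∀ i j, DifferentiableOn ℂ (fun z => f z i j) {z : ℂ | z ≠ 0})
    (hfu : ∀ z : ℂ, z ≠ 0 → IsUnit (f z)) : ∃ p q m, IsDatum f p q m := by
  obtain ⟨K, P, Q, hP, hQ, hu, heq⟩ := section_exist f ((mat_diffOn f).2 hfd) hfu
  refine ⟨fun j z i => P z i j, fun j z i => Q z i j, fun _ => K, ⟨?_, ?_, ?_, ?_⟩⟩
  · intro j
    exact differentiable_pi.2 fun i => (mat_diff P).1 hP i j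
  · intro j
    exact differentiable_pi.2 fun i => (mat_diff Q).1 hQ i j
  · have : (Matrix.of fun j i => P (1 / 2) i j) = (P (1 / 2)).transpose := rfl
    rw [this, Matrix.det_transpose]
    exact ((Matrix.isUnit_iff_isUnit_det _).1 hu).ne_zero
  · intro z hz j
    ext i
    rw [heq z hz]
    simp [Matrix.mul_apply, Matrix.mulVec, dotProduct]

lemma of_det_diff (p : Fin n → ℂ → (Fin n → ℂ)) (hp : ∀ j, Differentiable ℂ (p j)) :
    Differentiable ℂ fun z => (Matrix.of fun j => p j z).det :=
  det_differentiable (fun z => Matrix.of fun j => p j z)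
    (fun i j => differentiable_pi.1 (hp i) j)

/-- The total degree of a datum is bounded below. -/
lemma datum_lower (f : ℂ → Matrix (Fin n) (Fin n) ℂ)
    (hfd : ∀ i j, DifferentiableOn ℂ (fun z => f z i j) {z : ℂ | z ≠ 0})
    (hfu : ∀ z : ℂ, z ≠ 0 → IsUnit (f z)) :
    ∃ c : ℤ, ∀ p q m, IsDatum f p q m → c ≤ ∑ j, m j := by
  have hdet : ∀ z : ℂ, z ≠ 0 → (f z).det ≠ 0 := fun z hz =>
    ((Matrix.isUnit_iff_isUnit_det _).1 (hfu z hz)).ne_zero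
  obtain ⟨p2, q2, m2, h2⟩ := exists_datum (fun z => (f z)⁻¹) (inv_entries_diffOn f hfd hfu)
    (fun z hz => by
      rw [Matrix.isUnit_nonsing_inv_iff]
      exact hfu z hz)
  refine ⟨-∑ j, m2 j, fun p q m hD => ?_⟩
  by_contra hlt
  push Not at hlt
  set H : ℂ → ℂ := fun u => (Matrix.of fun j => q2 j u).det * (Matrix.of fun j => q j u).det with hH
  have hHd : Differentiable ℂ H := (of_det_diff q2 h2.hq).mul (of_det_diff q hD.hq)
  have hlim : Tendsto (fun z : ℂ => H z⁻¹) (cocompact ℂ) (nhds (H 0)) := by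
    rw [← Metric.cobounded_eq_cocompact]
    exact hHd.continuous.continuousAt.tendsto.comp tendsto_inv₀_cobounded
  have := liouville_zpow
    (fun z => (Matrix.of fun j => p2 j z).det * (Matrix.of fun j => p j z).det)
    (fun z => H z⁻¹) ((of_det_diff p2 h2.hp).mul (of_det_diff p hD.hp))
    (∑ j, m2 j + ∑ j, m j) (by linarith) (H 0) hlim (by
      intro z hz
      simp only [hH]
      rw [datum_det h2.heq z hz, datum_det hD.heq z hz, zpow_add₀ hz, Matrix.det_nonsing_inv,
        Ring.inverse_eq_inv']
      have := hdet z hz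
      field_simp) (1 / 2)
  exact mul_ne_zero h2.hdet hD.hdet this

/-- A datum of minimal degree has nowhere vanishing determinants. -/
lemma exists_good_datum (f : ℂ → Matrix (Fin n) (Fin n) ℂ)
    (hfd : ∀ i j, DifferentiableOn ℂ (fun z => f z i j) {z : ℂ | z ≠ 0})
    (hfu : ∀ z : ℂ, z ≠ 0 → IsUnit (f z)) :
    ∃ p q m, IsDatum f p q m ∧ (∀ z, (Matrix.of fun j => p j z).det ≠ 0) ∧
      (∀ u, (Matrix.of fun j => q j u).det ≠ 0) := by
  obtain ⟨c, hc⟩ := datum_lower f hfd hfu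
  have key : ∀ N : ℕ, ∀ p q m, IsDatum f p q m → (∑ j, m j - c).toNat ≤ N →
      ∃ p q m, IsDatum f p q m ∧ (∀ z, (Matrix.of fun j => p j z).det ≠ 0) ∧
        (∀ u, (Matrix.of fun j => q j u).det ≠ 0) := by
    intro N
    induction N with
    | zero =>
      intro p q m hD hN
      have step : ¬ ∃ p' q' m', IsDatum f p' q' m' ∧ ∑ j, m' j < ∑ j, m j := by
        rintro ⟨p', q', m', hD', hlt⟩
        have := hc p' q' m' hD'
        omega
      have h1 : ∀ z, (Matrix.of fun j => p j z).det ≠ 0 := fun z hz =>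
        step (reduce_p hfu (inv_entries_diffOn f hfd hfu) hD z hz)
      refine ⟨p, q, m, hD, h1, fun u hu => ?_⟩
      by_cases hu0 : u = 0
      · subst hu0
        exact step (reduce_q hD hu)
      · have := datum_det hD.heq u⁻¹ (inv_ne_zero hu0)
        rw [inv_inv, hu, mul_zero, zero_mul] at this
        exact h1 _ this
    | succ N ih =>
      intro p q m hD hN
      by_cases step : ∃ p' q' m', IsDatum f p' q' m' ∧ ∑ j, m' j < ∑ j, m j
      · obtain ⟨p', q', m', hD', hlt⟩ := step
        have := hc p' q' m' hD'
        exact ih p' q' m' hD' (by omega)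
      have h1 : ∀ z, (Matrix.of fun j => p j z).det ≠ 0 := fun z hz =>
        step (reduce_p hfu (inv_entries_diffOn f hfd hfu) hD z hz)
      refine ⟨p, q, m, hD, h1, fun u hu => ?_⟩
      by_cases hu0 : u = 0
      · subst hu0
        exact step (reduce_q hD hu)
      · have := datum_det hD.heq u⁻¹ (inv_ne_zero hu0)
        rw [inv_inv, hu, mul_zero, zero_mul] at this
        exact h1 _ this
  obtain ⟨p, q, m, hD⟩ := exists_datum f hfd hfu
  exact key _ p q m hD le_rfl

lemma exists_factorization (f : ℂ → Matrix (Fin n) (Fin n) ℂ)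
    (hfd : ∀ i j, DifferentiableOn ℂ (fun z => f z i j) {z : ℂ | z ≠ 0})
    (hfu : ∀ z : ℂ, z ≠ 0 → IsUnit (f z)) :
    ∃ κ : Fin n → ℤ, Antitone κ ∧ EntireBirkhoffFactorization n f κ := by
  obtain ⟨p0, q0, m0, hD, hp0, hq0⟩ := exists_good_datum f hfd hfu
  let σ := Tuple.sort m0
  have hmono : Monotone (m0 ∘ σ) := Tuple.monotone_sort m0
  have hsgn : ((Equiv.Perm.sign σ : ℤ) : ℂ) ≠ 0 := by
    rcases Int.units_eq_one_or (Equiv.Perm.sign σ) with h | h <;> simp [h]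
  have hp : ∀ z, (Matrix.of fun j => p0 (σ j) z).det ≠ 0 := by
    intro z
    have := Matrix.det_permute σ (Matrix.of fun j => p0 j z)
    exact ne_of_eq_of_ne this (mul_ne_zero hsgn (hp0 z))
  have hq : ∀ z, (Matrix.of fun j => q0 (σ j) z).det ≠ 0 := by
    intro z
    have := Matrix.det_permute σ (Matrix.of fun j => q0 j z)
    exact ne_of_eq_of_ne this (mul_ne_zero hsgn (hq0 z))
  have heq : ∀ z : ℂ, z ≠ 0 → ∀ j, p0 (σ j) z = z ^ (m0 (σ j)) • (f z).mulVec (q0 (σ j) z⁻¹) :=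
    fun z hz j => hD.heq z hz (σ j)
  set Q : ℂ → Matrix (Fin n) (Fin n) ℂ := fun u => (Matrix.of fun j => q0 (σ j) u).transpose with hQ
  have hQu : ∀ u, IsUnit (Q u) := fun u => by
    rw [Matrix.isUnit_iff_isUnit_det, hQ, Matrix.det_transpose]
    exact (hq u).isUnit
  have hQd : ∀ i j, Differentiable ℂ fun u => Q u i j := fun i j =>
    differentiable_pi.1 (hD.hq (σ j)) i
  have hQid := inv_entries_diff Q hQd hQu
  refine ⟨fun j => -m0 (σ j), fun i j hij => neg_le_neg (hmono hij),
    fun z => (Matrix.of fun j => p0 (σ j) z).transpose, fun z => (Q z⁻¹)⁻¹, (Q 0)⁻¹,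
    ?_, ?_, ?_, ?_, ?_, ?_, ?_⟩
  · intro i j
    exact differentiable_pi.1 (hD.hp (σ j)) i
  · intro z
    rw [Matrix.isUnit_iff_isUnit_det, Matrix.det_transpose]
    exact (hp z).isUnit
  · intro i j z hz
    exact ((hQid i j z⁻¹).comp z (differentiableAt_inv hz)).differentiableWithinAt
  · intro z _
    rw [Matrix.isUnit_nonsing_inv_iff]
    exact hQu _
  · rw [Matrix.isUnit_nonsing_inv_iff]
    exact hQu _
  · intro i j
    rw [comap_norm_atTop]
    exact (hQid i j).continuous.continuousAt.tendsto.comp tendsto_inv₀_cobounded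
  · intro z hz
    have h1 := datum_mat heq z hz
    beta_reduce
    beta_reduce at h1
    rw [h1, Matrix.mul_assoc _ (Matrix.diagonal _) (Matrix.diagonal _), Matrix.diagonal_mul_diagonal]
    have h2 : (fun j => z ^ m0 (σ j) * z ^ (-m0 (σ j))) = fun _ => (1 : ℂ) := by
      funext j
      rw [zpow_neg, mul_inv_cancel₀ (zpow_ne_zero _ hz)]
    rw [h2, Matrix.diagonal_one, Matrix.mul_one, Matrix.mul_assoc]
    have h3 : Q z⁻¹ * (Q z⁻¹)⁻¹ = 1 :=
      Matrix.mul_nonsing_inv _ ((Matrix.isUnit_iff_isUnit_det _).1 (hQu z⁻¹))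
    exact (by rw [h3, Matrix.mul_one] : f z = f z * (Q z⁻¹ * (Q z⁻¹)⁻¹))

lemma det_zero_of_block (A : Matrix (Fin n) (Fin n) ℂ) (r : Fin n)
    (h : ∀ i j, r ≤ i → j ≤ r → A i j = 0) : A.det = 0 := by
  rw [Matrix.det_apply]
  refine Finset.sum_eq_zero fun σ _ => ?_
  obtain ⟨j, hj, hσ⟩ : ∃ j, j ≤ r ∧ r ≤ σ j := by
    by_contra hcon
    push Not at hcon
    have : (Finset.Iic r).card ≤ (Finset.Iio r).card :=
      Finset.card_le_card_of_injOn σ (fun j hj => by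
        simpa using hcon j (by simpa using hj)) σ.injective.injOn
    simp at this
  have hz : ∏ i, A (σ i) i = 0 :=
    Finset.prod_eq_zero (f := fun i => A (σ i) i) (Finset.mem_univ j) (h _ _ hσ hj)
  rw [hz, smul_zero]

lemma index_le (f : ℂ → Matrix (Fin n) (Fin n) ℂ) (κ κ' : Fin n → ℤ) (hκ : Antitone κ)
    (hκ' : Antitone κ') (h : EntireBirkhoffFactorization n f κ)
    (h' : EntireBirkhoffFactorization n f κ') : κ ≤ κ' := by
  obtain ⟨Fp, Fm, L, hFp, hFpu, -, hFmu, hL, hFmL, hf⟩ := h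
  obtain ⟨Gp, Gm, L', hGp, hGpu, -, hGmu, hL', hGmL, hg⟩ := h'
  intro r
  by_contra hlt
  push Not at hlt
  have hGi := inv_entries_diff Gp hGp hGpu
  have hu : ∀ {M : Matrix (Fin n) (Fin n) ℂ}, IsUnit M → M⁻¹ * M = 1 := fun hM =>
    Matrix.nonsing_inv_mul _ ((Matrix.isUnit_iff_isUnit_det _).1 hM)
  have hu' : ∀ {M : Matrix (Fin n) (Fin n) ℂ}, IsUnit M → M * M⁻¹ = 1 := fun hM =>
    Matrix.mul_nonsing_inv _ ((Matrix.isUnit_iff_isUnit_det _).1 hM)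
  have hrel : ∀ z : ℂ, z ≠ 0 → ((Gp z)⁻¹ * Fp z) * Matrix.diagonal (fun i => z ^ κ i) =
      Matrix.diagonal (fun i => z ^ κ' i) * (Gm z * (Fm z)⁻¹) := by
    intro z hz
    have e : Fp z * Matrix.diagonal (fun i => z ^ κ i) * Fm z =
      Gp z * Matrix.diagonal (fun i => z ^ κ' i) * Gm z := (hf z hz).symm.trans (hg z hz)
    calc ((Gp z)⁻¹ * Fp z) * Matrix.diagonal (fun i => z ^ κ i)
        = (Gp z)⁻¹ * (Fp z * Matrix.diagonal (fun i => z ^ κ i) * Fm z) * (Fm z)⁻¹ := by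
          simp only [Matrix.mul_assoc, hu' (hFmu z hz), Matrix.mul_one]
      _ = ((Gp z)⁻¹ * Gp z) * (Matrix.diagonal (fun i => z ^ κ' i) * (Gm z * (Fm z)⁻¹)) := by
          rw [e]
          simp only [Matrix.mul_assoc]
      _ = _ := by rw [hu (hGpu z), Matrix.one_mul]
  have hzero : ∀ i j, r ≤ i → j ≤ r → ((Gp 1)⁻¹ * Fp 1) i j = 0 := by
    intro i j hi hj
    have hneg : κ' i - κ j < 0 := by
      have := hκ' hi
      have := hκ hj
      linarith
    refine liouville_zpow (fun z => ((Gp z)⁻¹ * Fp z) i j) (fun z => (Gm z * (Fm z)⁻¹) i j) ?_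
      (κ' i - κ j) hneg ((L' * L⁻¹) i j) ?_ ?_ 1
    · simp only [Matrix.mul_apply]
      exact Differentiable.fun_sum fun k _ => (hGi i k).mul (hFp k j)
    · rw [← norm_comap_eq]
      simp only [Matrix.mul_apply]
      exact tendsto_finsetSum _ fun k _ => (hGmL i k).mul (tendsto_inv_entries Fm L hL hFmL k j)
    · intro z hz
      have := congrFun (congrFun (hrel z hz) i) j
      rw [Matrix.mul_diagonal, Matrix.diagonal_mul] at this
      rw [zpow_sub₀ hz, div_mul_eq_mul_div, eq_div_iff (zpow_ne_zero _ hz), this]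
  have hd := det_zero_of_block _ r hzero
  have hunit : IsUnit ((Gp 1)⁻¹ * Fp 1) :=
    (Matrix.isUnit_nonsing_inv_iff.2 (hGpu 1)).mul (hFpu 1)
  exact ((Matrix.isUnit_iff_isUnit_det _).1 hunit).ne_zero hd

end conclude
end Birk


theorem stmt_6 (n : ℕ) (f : ℂ → Matrix (Fin n) (Fin n) ℂ)
    (hfd : ∀ i j, DifferentiableOn ℂ (fun z => f z i j) {z : ℂ | z ≠ 0})
    (hfu : ∀ z : ℂ, z ≠ 0 → IsUnit (f z)) :
    ∃ κ : Fin n → ℤ, Antitone κ ∧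
      EntireBirkhoffFactorization n f κ ∧
      ∀ κ' : Fin n → ℤ, Antitone κ' → EntireBirkhoffFactorization n f κ' → κ' = κ := by
  obtain ⟨κ, hκ, hfac⟩ := Birk.exists_factorization f hfd hfu
  exact ⟨κ, hκ, hfac, fun κ' hκ' hfac' =>
    le_antisymm (Birk.index_le f κ' κ hκ' hκ hfac' hfac)
      (Birk.index_le f κ κ' hκ hκ' hfac hfac')⟩
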